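/- Under the Hamiltonian flow setup, there exist constants ε > 0 and C, depending only on n and the constants C_α, such that for all μ ≥ 1, all t with μ^{-2} ≤ t ≤ ε μ^{-1}, all x, z ∈ ℝ^n, and all ξ, ζ ∈ ℝ^n with μ/4 ≤ |ξ| ≤ 4μ, μ/4 ≤ |ζ| ≤ 4μ and |ξ − ζ| ≤ t^{-1/2}, one has t^{-1/2} | (x − z) − (d_ζ ζ_t(z,ζ)) ( z_t(x,ξ) − z_t(z,ζ) ) | ≤ C ( 1 + μ |x − z|² ), where d_ζ ζ_t(z,ζ) denotes the n × n Jacobian matrix of ζ_t with respect to the initial frequency variable, acting on the vector z_t(x,ξ) − z_t(z,ζ) by the pairing used in the paper. -/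

import Mathlib

open MeasureTheory Complex Real
open scoped ENNReal NNReal RealInnerProductSpace

noncomputable section

/-- Euclidean space `ℝ^n`. -/
abbrev En (n : ℕ) := EuclideanSpace ℝ (Fin n)

/-- The `i`-th coordinate vector of `ℝ^n`. -/
def ev {n : ℕ} (i : Fin n) : En n := EuclideanSpace.single i (1 : ℝ)

/-- The Hamiltonian `a(z,ζ) = Σᵢⱼ aⁱʲ(z) ζᵢ ζⱼ` on phase space `ℝ^n × ℝ^n`. -/
def ham {n : ℕ} (a : Fin n → Fin n → En n → ℝ) (w : En n × En n) : ℝ :=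
  ∑ i, ∑ j, a i j w.1 * w.2 i * w.2 j

/-- The Hamiltonian vector field `(d_ζ a, −d_z a)` of `ham a`. -/
def hamField {n : ℕ} (a : Fin n → Fin n → En n → ℝ) (w : En n × En n) :
    En n × En n :=
  (gradient (fun ζ => ham a (w.1, ζ)) w.2, -gradient (fun z => ham a (z, w.2)) w.1)

/-- `χ` is the flow of Hamilton's equations `∂ₜ z = d_ζ a`, `∂ₜ ζ = −d_z a`
with `χ 0 = id`. -/
def IsHamFlow {n : ℕ} (a : Fin n → Fin n → En n → ℝ)
    (χ : ℝ → En n × En n → En n × En n) : Prop :=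
  (∀ w, χ 0 w = w) ∧ ∀ w t, HasDerivAt (fun s => χ s w) (hamField a (χ t w)) t

/-- The coefficient hypotheses of the Hamiltonian flow setup: `aⁱʲ` smooth symmetric,
`‖aⁱʲ − δᵢⱼ‖_{C²} ≤ 1`, and `|∂^α aⁱʲ| ≤ C_α μ^{max(0,|α|−2)/2}` for every order `|α|`. -/
def HamSetup {n : ℕ} (μ : ℝ) (Cα : ℕ → ℝ) (a : Fin n → Fin n → En n → ℝ) : Prop :=
  (∀ i j, ContDiff ℝ (⊤ : ℕ∞) (a i j)) ∧ (∀ i j, a i j = a j i) ∧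
    (∀ i j x, |a i j x - (if i = j then (1 : ℝ) else 0)| + ‖fderiv ℝ (a i j) x‖ +
      ‖iteratedFDeriv ℝ 2 (a i j) x‖ ≤ 1) ∧
    ∀ i j (k : ℕ) x, ‖iteratedFDeriv ℝ k (a i j) x‖ ≤
      Cα k * μ ^ (max 0 ((k : ℝ) - 2) / 2)

/-! ### Abstract part: Hamiltonian-type vector fields and their linearized flow -/

section AbstractPart

variable {E : Type*} [NormedAddCommGroup E] [InnerProductSpace ℝ E]

/-- A vector field `F` with linearization `L`, infinitesimally symplectic, with quantitative bounds
on the region `‖η‖ ≤ 8`. -/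
structure GoodField (F : E × E → E × E) (L : E × E → (E × E →L[ℝ] E × E)) (K M : ℝ) : Prop where
  bd : ∀ z η : E, ‖η‖ ≤ 8 → ‖(F (z, η)).2‖ ≤ K
  lbd : ∀ (z η : E) (v : E × E), ‖η‖ ≤ 8 → ‖L (z, η) v‖ ≤ K * ‖v‖
  lcont : Continuous L
  lip : ∀ z η u q : E, ‖η‖ ≤ 8 → ‖η + q‖ ≤ 8 → ‖F (z + u, η + q) - F (z, η)‖ ≤ K * ‖(u, q)‖
  r1 : ∀ z η u q : E, ‖η‖ ≤ 8 → ‖η + q‖ ≤ 8 →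
    ‖(F (z + u, η + q) - F (z, η) - L (z, η) (u, q)).1‖ ≤ K * (‖u‖ * ‖q‖ + ‖u‖ ^ 2)
  r2 : ∀ z η u q : E, ‖η‖ ≤ 8 → ‖η + q‖ ≤ 8 →
    ‖(F (z + u, η + q) - F (z, η) - L (z, η) (u, q)).2‖ ≤
      K * (M * ‖u‖ ^ 2 + ‖u‖ * ‖q‖ + ‖q‖ ^ 2)
  symp : ∀ w Y V : E × E, ⟪(L w Y).2, V.1⟫ - ⟪(L w Y).1, V.2⟫
    + (⟪Y.2, (L w V).1⟫ - ⟪Y.1, (L w V).2⟫) = 0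

theorem hasDerivWithinAt_fst' {f : ℝ → E × E} {f' : E × E} {S : Set ℝ} {s : ℝ}
    (h : HasDerivWithinAt f f' S s) : HasDerivWithinAt (fun t => (f t).1) f'.1 S s :=
  (ContinuousLinearMap.fst ℝ E E).hasFDerivAt.comp_hasDerivWithinAt s h

theorem hasDerivWithinAt_snd' {f : ℝ → E × E} {f' : E × E} {S : Set ℝ} {s : ℝ}
    (h : HasDerivWithinAt f f' S s) : HasDerivWithinAt (fun t => (f t).2) f'.2 S s :=
  (ContinuousLinearMap.snd ℝ E E).hasFDerivAt.comp_hasDerivWithinAt s h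

theorem GoodField.zero (M : ℝ) : GoodField (E := E) (fun _ => 0) (fun _ => 0) 0 M := by
  constructor <;> intros <;> simp [continuous_const]

theorem GoodField.add {F F' : E × E → E × E} {L L' : E × E → (E × E →L[ℝ] E × E)} {K K' M : ℝ}
    (h : GoodField F L K M) (h' : GoodField F' L' K' M) :
    GoodField (fun w => F w + F' w) (fun w => L w + L' w) (K + K') M where
  bd z η hη := by
    rw [Prod.snd_add]
    exact (norm_add_le _ _).trans (add_le_add (h.bd z η hη) (h'.bd z η hη))
  lbd z η v hη := by
    rw [add_apply, add_mul]
    exact (norm_add_le _ _).trans (add_le_add (h.lbd z η v hη) (h'.lbd z η v hη))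
  lcont := h.lcont.add h'.lcont
  lip z η u q h1 h2 := by
    rw [add_mul, add_sub_add_comm]
    exact (norm_add_le _ _).trans (add_le_add (h.lip z η u q h1 h2) (h'.lip z η u q h1 h2))
  r1 z η u q h1 h2 := by
    rw [add_mul, add_sub_add_comm, add_apply, add_sub_add_comm, Prod.fst_add]
    exact (norm_add_le _ _).trans (add_le_add (h.r1 z η u q h1 h2) (h'.r1 z η u q h1 h2))
  r2 z η u q h1 h2 := by
    rw [add_mul, add_sub_add_comm, add_apply, add_sub_add_comm, Prod.snd_add]
    exact (norm_add_le _ _).trans (add_le_add (h.r2 z η u q h1 h2) (h'.r2 z η u q h1 h2))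
  symp w Y V := by
    have a := h.symp w Y V
    have b := h'.symp w Y V
    simp only [add_apply, Prod.fst_add, Prod.snd_add, inner_add_left,
      inner_add_right]
    linarith

theorem GoodField.sum {ι : Type*} (s : Finset ι) {F : ι → E × E → E × E}
    {L : ι → E × E → (E × E →L[ℝ] E × E)} {K : ι → ℝ} {M : ℝ}
    (h : ∀ i, GoodField (F i) (L i) (K i) M) :
    GoodField (fun w => ∑ i ∈ s, F i w) (fun w => ∑ i ∈ s, L i w) (∑ i ∈ s, K i) M := by
  classical
  induction s using Finset.induction_on with
  | empty => simpa using GoodField.zero M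
  | insert i s hi ih =>
    simp only [Finset.sum_insert hi]
    exact (h i).add ih

theorem GoodField.mono {F : E × E → E × E} {L : E × E → (E × E →L[ℝ] E × E)} {K K' M : ℝ}
    (hM : 0 ≤ M) (hK : K ≤ K') (h : GoodField F L K M) : GoodField F L K' M where
  bd z η hη := (h.bd z η hη).trans hK
  lbd z η v hη := (h.lbd z η v hη).trans (by gcongr)
  lcont := h.lcont
  lip z η u q h1 h2 := (h.lip z η u q h1 h2).trans (by gcongr)
  r1 z η u q h1 h2 := (h.r1 z η u q h1 h2).trans (by gcongr)
  r2 z η u q h1 h2 := (h.r2 z η u q h1 h2).trans (by gcongr)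
  symp := h.symp

/-- Grönwall on a short interval. -/
theorem short_gronwall {X : Type*} [NormedAddCommGroup X] [NormedSpace ℝ X] {f f' : ℝ → X}
    {K T δ e : ℝ} (hK : 1 ≤ K) (hKT : K * T ≤ 1 / 8) (hδ : 0 ≤ δ) (he : 0 ≤ e)
    (hf : ∀ s ∈ Set.Icc 0 T, HasDerivWithinAt f (f' s) (Set.Icc 0 T) s)
    (h0 : ‖f 0‖ ≤ δ) (hb : ∀ s ∈ Set.Icc 0 T, ‖f' s‖ ≤ K * ‖f s‖ + e) :
    ∀ s ∈ Set.Icc 0 T, ‖f s‖ ≤ 2 * δ + e := by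
  intro s hs
  have key := norm_le_gronwallBound_of_norm_deriv_right_le
    (fun s hs => (hf s hs).continuousWithinAt)
    (fun s hs => (hf s ⟨hs.1, hs.2.le⟩).mono_of_mem_nhdsWithin (Icc_mem_nhdsGE_of_mem hs))
    h0 (fun s hs => hb s ⟨hs.1, hs.2.le⟩) s hs
  refine key.trans ?_
  have hK0 : K ≠ 0 := by positivity
  rw [gronwallBound_of_K_ne_0 hK0]
  simp only [sub_zero]
  have h1 : K * s ≤ 1 / 8 := le_trans (by gcongr; exact hs.2) hKT
  have h2 : rexp (K * s) ≤ 2 := by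
    have : rexp (K * s) ≤ rexp (Real.log 2) := by
      gcongr
      have := Real.log_two_gt_d9
      linarith
    rwa [Real.exp_log (by norm_num)] at this
  have h3 : e / K ≤ e := div_le_self he hK
  have h4 : 0 ≤ e / K := by positivity
  nlinarith

variable {F : E × E → E × E} {L : E × E → (E × E →L[ℝ] E × E)} {K M T : ℝ}

theorem curve_bound (hG : GoodField F L K M) (hK : 1 ≤ K) (hKT : K * T ≤ 1 / 8)
    {γ : ℝ → E × E} (hγ : ∀ s, HasDerivAt γ (F (γ s)) s) (h0 : ‖(γ 0).2‖ ≤ 5) :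
    ∀ s ∈ Set.Icc 0 T, ‖(γ s).2‖ ≤ 8 := by
  have hd : ∀ s, HasDerivAt (fun s => (γ s).2) (F (γ s)).2 s := fun s => (hγ s).snd
  have key := image_norm_le_of_norm_deriv_right_lt_deriv_boundary' (a := 0) (b := T)
    (f := fun s => (γ s).2) (f' := fun s => (F (γ s)).2) (B := fun s => 5 + 2 * K * s)
    (B' := fun _ => 2 * K)
    (fun s _ => (hd s).continuousAt.continuousWithinAt)
    (fun s _ => (hd s).hasDerivWithinAt) (by simpa using h0) (by fun_prop)
    (fun s _ => by
      simpa using (((hasDerivAt_id s).const_mul (2 * K)).const_add 5).hasDerivWithinAt)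
    (fun s hs h => by
      have h1 : ‖(γ s).2‖ ≤ 8 := by
        rw [h]
        have : K * s ≤ K * T := by gcongr; exact hs.2.le
        linarith
      have := hG.bd (γ s).1 (γ s).2 h1
      simp only [Prod.mk.eta] at this
      linarith)
  intro s hs
  have h2 := key hs
  have : K * s ≤ K * T := by gcongr; exact hs.2
  linarith

theorem curve_diff (hG : GoodField F L K M) (hK : 1 ≤ K) (hKT : K * T ≤ 1 / 8)
    {γ γ' : ℝ → E × E} (hγ : ∀ s, HasDerivAt γ (F (γ s)) s) (hγ' : ∀ s, HasDerivAt γ' (F (γ' s)) s)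
    (h0 : ‖(γ 0).2‖ ≤ 5) (h0' : ‖(γ' 0).2‖ ≤ 5) :
    ∀ s ∈ Set.Icc 0 T, ‖γ' s - γ s‖ ≤ 2 * ‖γ' 0 - γ 0‖ ∧
      ‖F (γ' s) - F (γ s)‖ ≤ K * ‖γ' s - γ s‖ := by
  have hl : ∀ s ∈ Set.Icc 0 T, ‖F (γ' s) - F (γ s)‖ ≤ K * ‖γ' s - γ s‖ := by
    intro s hs
    have := hG.lip (γ s).1 (γ s).2 ((γ' s).1 - (γ s).1) ((γ' s).2 - (γ s).2)
      (curve_bound hG hK hKT hγ h0 s hs)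
      (by simpa using curve_bound hG hK hKT hγ' h0' s hs)
    simp only [add_sub_cancel, Prod.mk.eta] at this
    exact this
  intro s hs
  refine ⟨?_, hl s hs⟩
  have := short_gronwall (f := fun s => γ' s - γ s) hK hKT (norm_nonneg (γ' 0 - γ 0)) le_rfl
    (fun s _ => ((hγ' s).sub (hγ s)).hasDerivWithinAt) le_rfl
    (fun s hs => by simpa using hl s hs) s hs
  simpa using this

variable [CompleteSpace E]

/-- Existence of the linearized flow in the frequency directions. -/
theorem exists_linearized (hG : GoodField F L K M) (hK : 1 ≤ K) (hT : 0 ≤ T) (hKT : K * T ≤ 1 / 8)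
    {γ : ℝ → E × E} (hγ : ∀ s, HasDerivAt γ (F (γ s)) s) (h0 : ‖(γ 0).2‖ ≤ 5) :
    ∃ Y : ℝ → (E →L[ℝ] E × E), Y 0 = ContinuousLinearMap.inr ℝ E E ∧
      (∀ s ∈ Set.Icc 0 T, HasDerivWithinAt Y ((L (γ s)).comp (Y s)) (Set.Icc 0 T) s) ∧
      ∀ s ∈ Set.Icc 0 T, ‖Y s‖ ≤ 2 := by
  have hLn : ∀ s ∈ Set.Icc 0 T, ‖L (γ s)‖ ≤ K := fun s hs =>
    ContinuousLinearMap.opNorm_le_bound _ (by positivity)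
      (fun v => hG.lbd (γ s).1 (γ s).2 v (curve_bound hG hK hKT hγ h0 s hs))
  have hcont : Continuous γ := continuous_iff_continuousAt.2 fun s => (hγ s).continuousAt
  have hinr : ‖ContinuousLinearMap.inr ℝ E E‖ ≤ 1 :=
    ContinuousLinearMap.opNorm_le_bound _ zero_le_one (fun v => by simp)
  have hcomp : ∀ s ∈ Set.Icc 0 T, ∀ Z : E →L[ℝ] E × E, ‖(L (γ s)).comp Z‖ ≤ K * ‖Z‖ :=
    fun s hs Z => (ContinuousLinearMap.opNorm_comp_le _ _).trans (by gcongr; exact hLn s hs)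
  have hPL : IsPicardLindelof (fun s (Z : E →L[ℝ] E × E) => (L (γ s)).comp Z)
      (tmin := 0) (tmax := T) ⟨0, le_rfl, hT⟩ (ContinuousLinearMap.inr ℝ E E)
      1 0 (2 * K.toNNReal) K.toNNReal := by
    refine ⟨fun s hs => ?_, fun Z _ => ?_, fun s hs Z hZ => ?_, ?_⟩
    · refine LipschitzOnWith.of_dist_le_mul fun Z _ Z' _ => ?_
      rw [dist_eq_norm, dist_eq_norm, ← ContinuousLinearMap.comp_sub,
        Real.coe_toNNReal K (by positivity)]
      exact hcomp s hs _
    · exact ((hG.lcont.comp hcont).clm_comp continuous_const).continuousOn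
    · refine (hcomp s hs Z).trans ?_
      have h1 : ‖Z‖ ≤ 2 := by
        have h2 : ‖Z - ContinuousLinearMap.inr ℝ E E‖ ≤ 1 := by
          simpa [dist_eq_norm] using hZ
        have := norm_le_norm_add_norm_sub' Z (ContinuousLinearMap.inr ℝ E E)
        linarith
      push_cast
      rw [Real.coe_toNNReal K (by positivity)]
      nlinarith
    · push_cast
      rw [Real.coe_toNNReal K (by positivity)]
      simp [hT]
      linarith
  obtain ⟨Y, hY0, hY⟩ := hPL.exists_eq_forall_mem_Icc_hasDerivWithinAt₀
  refine ⟨Y, hY0, hY, fun s hs => ?_⟩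
  have := short_gronwall (f := Y) hK hKT zero_le_one le_rfl hY (by
    have : Y 0 = ContinuousLinearMap.inr ℝ E E := hY0
    rw [this]; exact hinr) (fun s hs => by simpa using hcomp s hs (Y s)) s hs
  linarith

/-- The flow is differentiable in the frequency variable, with derivative the linearized flow. -/
theorem flow_hasFDerivAt (hG : GoodField F L K M) (hM : 0 ≤ M) (hK : 1 ≤ K)
    (hKT : K * T ≤ 1 / 8)
    {χ : ℝ → E × E → E × E} (hχ0 : ∀ w, χ 0 w = w)
    (hχ : ∀ w s, HasDerivAt (fun s => χ s w) (F (χ s w)) s)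
    {z ζ : E} (hζ : ‖ζ‖ ≤ 4) {Y : ℝ → (E →L[ℝ] E × E)} (hY0 : Y 0 = ContinuousLinearMap.inr ℝ E E)
    (hY : ∀ s ∈ Set.Icc 0 T, HasDerivWithinAt Y ((L (χ s (z, ζ))).comp (Y s)) (Set.Icc 0 T) s)
    {s : ℝ} (hs : s ∈ Set.Icc 0 T) :
    HasFDerivAt (fun ζ' => χ s (z, ζ')) (Y s) ζ := by
  have main : ∀ h : E, ‖h‖ ≤ 1 →
      ‖χ s (z, ζ + h) - χ s (z, ζ) - Y s h‖ ≤ K * (M + 2) * 4 * ‖h‖ ^ 2 := by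
    intro h hh
    have b0 : ‖(χ 0 (z, ζ)).2‖ ≤ 5 := by rw [hχ0]; simp only; linarith
    have b1 : ‖(χ 0 (z, ζ + h)).2‖ ≤ 5 := by
      rw [hχ0]; simp only; have := norm_add_le ζ h; linarith
    have hd := curve_diff hG hK hKT (hχ (z, ζ)) (hχ (z, ζ + h)) b0 b1
    have hYh : ∀ s ∈ Set.Icc 0 T, HasDerivWithinAt (fun s => Y s h) (L (χ s (z, ζ)) (Y s h))
        (Set.Icc 0 T) s := fun s hs => by
      simpa using (hY s hs).clm_apply (hasDerivWithinAt_const s _ h)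
    have := short_gronwall (f := fun s => χ s (z, ζ + h) - χ s (z, ζ) - Y s h) (δ := 0)
      (e := K * (M + 2) * 4 * ‖h‖ ^ 2) hK hKT le_rfl
      (by positivity)
      (fun s hs => (((hχ (z, ζ + h) s).sub (hχ (z, ζ) s)).hasDerivWithinAt).sub (hYh s hs))
      (by simp [hχ0, hY0]) ?_ s hs
    · linarith
    intro s hs
    set w := χ s (z, ζ) with hw
    set w' := χ s (z, ζ + h) with hw'
    have c0 : ‖w.2‖ ≤ 8 := curve_bound hG hK hKT (hχ (z, ζ)) b0 s hs
    have c1 : ‖w'.2‖ ≤ 8 := curve_bound hG hK hKT (hχ (z, ζ + h)) b1 s hs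
    have hv : ‖w' - w‖ ≤ 2 * ‖h‖ := by
      have := (hd s hs).1
      simpa [hχ0] using this
    have hu : ‖w'.1 - w.1‖ ≤ 2 * ‖h‖ := (norm_fst_le (w' - w)).trans hv
    have hq : ‖w'.2 - w.2‖ ≤ 2 * ‖h‖ := (norm_snd_le (w' - w)).trans hv
    have e1 : ((w.1 + (w'.1 - w.1), w.2 + (w'.2 - w.2)) : E × E) = w' := by
      ext <;> simp
    have e2 : ((w'.1 - w.1, w'.2 - w.2) : E × E) = w' - w := rfl
    have r1 := hG.r1 w.1 w.2 (w'.1 - w.1) (w'.2 - w.2) c0 (by simpa using c1)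
    have r2 := hG.r2 w.1 w.2 (w'.1 - w.1) (w'.2 - w.2) c0 (by simpa using c1)
    rw [e1, e2, Prod.mk.eta] at r1 r2
    have hR : ‖F w' - F w - L w (w' - w)‖ ≤ K * (M + 2) * 4 * ‖h‖ ^ 2 := by
      rw [Prod.norm_def]
      have a1 : ‖w'.1 - w.1‖ * ‖w'.2 - w.2‖ ≤ (2 * ‖h‖) * (2 * ‖h‖) := by gcongr
      have a2 : ‖w'.1 - w.1‖ ^ 2 ≤ (2 * ‖h‖) ^ 2 := by gcongr
      have a3 : ‖w'.2 - w.2‖ ^ 2 ≤ (2 * ‖h‖) ^ 2 := by gcongr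
      apply max_le
      · calc _ ≤ _ := r1
          _ ≤ K * ((2 * ‖h‖) * (2 * ‖h‖) + (2 * ‖h‖) ^ 2) := by gcongr
          _ ≤ K * ((M + 2) * 4 * ‖h‖ ^ 2) := by
            gcongr
            nlinarith [mul_nonneg hM (sq_nonneg ‖h‖)]
          _ = _ := by ring
      · calc _ ≤ _ := r2
          _ ≤ K * (M * (2 * ‖h‖) ^ 2 + (2 * ‖h‖) * (2 * ‖h‖) + (2 * ‖h‖) ^ 2) := by gcongr
          _ = _ := by ring
    have e3 : F w' - F w - L w (Y s h) = L w (w' - w - Y s h) + (F w' - F w - L w (w' - w)) := by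
      rw [map_sub]; abel
    rw [e3]
    exact (norm_add_le _ _).trans (add_le_add (hG.lbd w.1 w.2 _ c0) hR)
  rw [hasFDerivAt_iff_isLittleO_nhds_zero]
  have hO : (fun h => χ s (z, ζ + h) - χ s (z, ζ) - Y s h) =O[nhds 0] fun h : E => ‖h‖ ^ 2 := by
    refine Asymptotics.IsBigO.of_bound (K * (M + 2) * 4) ?_
    filter_upwards [Metric.closedBall_mem_nhds (0 : E) one_pos] with h hh
    simpa using main h (by simpa using hh)
  refine hO.trans_isLittleO ?_
  have := Asymptotics.isLittleO_pow_id (𝕜 := ℝ) (n := 2) (by norm_num)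
  have h2 := this.comp_tendsto (tendsto_norm_zero (E := E))
  exact Asymptotics.isLittleO_norm_right.1 h2

theorem symplectic_estimate (hG : GoodField F L K M) (hM : 0 ≤ M) (hK : 1 ≤ K)
    (hT : 0 ≤ T) (hKT : K * T ≤ 1 / 8)
    {χ : ℝ → E × E → E × E} (hχ0 : ∀ w, χ 0 w = w)
    (hχ : ∀ w s, HasDerivAt (fun s => χ s w) (F (χ s w)) s)
    {x z ξ ζ : E} (hξ : ‖ξ‖ ≤ 4) (hζ : ‖ζ‖ ≤ 4) {U Q : ℝ}
    (hU : U = 2 * ‖x - z‖ + 2 * K * T * ‖ξ - ζ‖) (hQ : Q = 2 * (‖x - z‖ + ‖ξ - ζ‖)) :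
    ‖(x - z) - ContinuousLinearMap.adjoint (fderiv ℝ (fun ζ' => (χ T (z, ζ')).2) ζ)
        ((χ T (x, ξ)).1 - (χ T (z, ζ)).1)‖ ≤
      2 * K * T * Q + T * (2 * (K * (U * Q + U ^ 2)) +
        2 * K * T * (K * (M * U ^ 2 + U * Q + Q ^ 2))) := by
  have b0 : ‖(χ 0 (z, ζ)).2‖ ≤ 5 := by rw [hχ0]; simp only; linarith
  have b1 : ‖(χ 0 (x, ξ)).2‖ ≤ 5 := by rw [hχ0]; simp only; linarith
  obtain ⟨Y, hY0, hY, hY2⟩ := exists_linearized hG hK hT hKT (hχ (z, ζ)) b0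
  have hTm : T ∈ Set.Icc 0 T := ⟨hT, le_rfl⟩
  have hD := (flow_hasFDerivAt hG hM hK hKT hχ0 hχ hζ hY0 hY hTm).snd
  rw [hD.fderiv]
  have hd := curve_diff hG hK hKT (hχ (z, ζ)) (hχ (x, ξ)) b0 b1
  set d := ‖x - z‖ with hdd
  set p := ‖ξ - ζ‖ with hpp
  have hd0 : 0 ≤ d := norm_nonneg _
  have hp0 : 0 ≤ p := norm_nonneg _
  have hU0 : 0 ≤ U := by rw [hU]; positivity
  have hQ0 : 0 ≤ Q := by rw [hQ]; positivity
  have hv0 : ‖χ 0 (x, ξ) - χ 0 (z, ζ)‖ ≤ d + p := by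
    rw [hχ0, hχ0, Prod.mk_sub_mk, Prod.norm_mk]
    exact max_le (by linarith) (by linarith)
  have hv : ∀ s ∈ Set.Icc 0 T, ‖χ s (x, ξ) - χ s (z, ζ)‖ ≤ Q := fun s hs => by
    have := (hd s hs).1
    rw [hQ]; linarith
  have hq : ∀ s ∈ Set.Icc 0 T, ‖(χ s (x, ξ)).2 - (χ s (z, ζ)).2‖ ≤ Q := fun s hs =>
    (norm_snd_le (χ s (x, ξ) - χ s (z, ζ))).trans (hv s hs)
  have hu : ∀ s ∈ Set.Icc 0 T, ‖(χ s (x, ξ)).1 - (χ s (z, ζ)).1‖ ≤ U := fun s hs => by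
    have := (convex_Icc (0 : ℝ) T).norm_image_sub_le_of_norm_hasDerivWithin_le
      (f := fun s => (χ s (x, ξ)).1 - (χ s (z, ζ)).1) (C := K * Q)
      (fun s _ => (hasDerivWithinAt_fst' ((hχ (x, ξ) s).hasDerivWithinAt.sub (hχ (z, ζ) s).hasDerivWithinAt)))
      (fun s hs => ((norm_fst_le (F (χ s (x, ξ)) - F (χ s (z, ζ)))).trans (hd s hs).2).trans
        (by gcongr; exact hv s hs)) ⟨le_rfl, hT⟩ hs
    rw [hχ0, hχ0] at this
    simp only [sub_zero, Real.norm_eq_abs, abs_of_nonneg hs.1] at this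
    have h3 := norm_le_norm_add_norm_sub' ((χ s (x, ξ)).1 - (χ s (z, ζ)).1) (x - z)
    have h4 : K * Q * s ≤ K * Q * T := by gcongr; exact hs.2
    have h5 : K * Q * T = 2 * (K * T) * d + 2 * K * T * p := by rw [hQ]; ring
    have h6 : 2 * (K * T) * d ≤ d := by nlinarith
    rw [hU]
    linarith
  have hYh : ∀ h : E, ∀ s ∈ Set.Icc 0 T, HasDerivWithinAt (fun s => Y s h)
      (L (χ s (z, ζ)) (Y s h)) (Set.Icc 0 T) s := fun h s hs => by
    simpa using (hY s hs).clm_apply (hasDerivWithinAt_const s _ h)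
  have hYn : ∀ h : E, ∀ s ∈ Set.Icc 0 T, ‖Y s h‖ ≤ 2 * ‖h‖ := fun h s hs =>
    ((Y s).le_opNorm h).trans (by gcongr; exact hY2 s hs)
  have hc0 : ∀ s ∈ Set.Icc 0 T, ‖(χ s (z, ζ)).2‖ ≤ 8 := curve_bound hG hK hKT (hχ (z, ζ)) b0
  have hc1 : ∀ s ∈ Set.Icc 0 T, ‖(χ s (x, ξ)).2‖ ≤ 8 := curve_bound hG hK hKT (hχ (x, ξ)) b1
  have hB : ∀ h : E, ∀ s ∈ Set.Icc 0 T, ‖(Y s h).1‖ ≤ 2 * K * T * ‖h‖ := fun h s hs => by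
    have := (convex_Icc (0 : ℝ) T).norm_image_sub_le_of_norm_hasDerivWithin_le
      (f := fun s => (Y s h).1) (C := K * (2 * ‖h‖))
      (fun s hs => hasDerivWithinAt_fst' (hYh h s hs))
      (fun s hs => ((norm_fst_le _).trans (hG.lbd _ _ _ (hc0 s hs))).trans
        (by gcongr; exact hYn h s hs)) ⟨le_rfl, hT⟩ hs
    simp only [hY0, sub_zero, Real.norm_eq_abs, abs_of_nonneg hs.1,
      ContinuousLinearMap.inr_apply] at this
    have h4 : K * (2 * ‖h‖) * s ≤ K * (2 * ‖h‖) * T := by gcongr; exact hs.2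
    linarith
  -- the symplectic pairing
  have pair : ∀ h : E, |⟪h, (x - z) - ContinuousLinearMap.adjoint
      ((ContinuousLinearMap.snd ℝ E E).comp (Y T)) ((χ T (x, ξ)).1 - (χ T (z, ζ)).1)⟫| ≤
      ‖h‖ * (2 * K * T * Q + T * (2 * (K * (U * Q + U ^ 2)) +
        2 * K * T * (K * (M * U ^ 2 + U * Q + Q ^ 2)))) := by
    intro h
    set σ : ℝ → ℝ := fun s => ⟪(Y s h).2, (χ s (x, ξ)).1 - (χ s (z, ζ)).1⟫
      - ⟪(Y s h).1, (χ s (x, ξ)).2 - (χ s (z, ζ)).2⟫ with hσ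
    set R : ℝ → E × E := fun s => F (χ s (x, ξ)) - F (χ s (z, ζ))
      - L (χ s (z, ζ)) (χ s (x, ξ) - χ s (z, ζ)) with hR
    have hσd : ∀ s ∈ Set.Icc 0 T, HasDerivWithinAt σ
        (⟪(Y s h).2, (R s).1⟫ - ⟪(Y s h).1, (R s).2⟫) (Set.Icc 0 T) s := by
      intro s hs
      have h1 := ((hasDerivWithinAt_snd' (hYh h s hs)).inner ℝ
        (hasDerivWithinAt_fst' ((hχ (x, ξ) s).hasDerivWithinAt.sub (hχ (z, ζ) s).hasDerivWithinAt))).sub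
        ((hasDerivWithinAt_fst' (hYh h s hs)).inner ℝ
        (hasDerivWithinAt_snd' ((hχ (x, ξ) s).hasDerivWithinAt.sub (hχ (z, ζ) s).hasDerivWithinAt)))
      refine h1.congr_deriv ?_
      have h2 := hG.symp (χ s (z, ζ)) (Y s h) (χ s (x, ξ) - χ s (z, ζ))
      simp only [hR, Pi.sub_apply, Prod.fst_sub, Prod.snd_sub, inner_sub_right] at h2 ⊢
      linarith
    have hR1 : ∀ s ∈ Set.Icc 0 T, ‖(R s).1‖ ≤ K * (U * Q + U ^ 2) := fun s hs => by
      have r1 := hG.r1 (χ s (z, ζ)).1 (χ s (z, ζ)).2 ((χ s (x, ξ)).1 - (χ s (z, ζ)).1)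
        ((χ s (x, ξ)).2 - (χ s (z, ζ)).2) (hc0 s hs) (by simpa using hc1 s hs)
      simp only [add_sub_cancel, Prod.mk.eta] at r1
      refine r1.trans ?_
      have := hu s hs
      have := hq s hs
      gcongr
    have hR2 : ∀ s ∈ Set.Icc 0 T, ‖(R s).2‖ ≤ K * (M * U ^ 2 + U * Q + Q ^ 2) := fun s hs => by
      have r2 := hG.r2 (χ s (z, ζ)).1 (χ s (z, ζ)).2 ((χ s (x, ξ)).1 - (χ s (z, ζ)).1)
        ((χ s (x, ξ)).2 - (χ s (z, ζ)).2) (hc0 s hs) (by simpa using hc1 s hs)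
      simp only [add_sub_cancel, Prod.mk.eta] at r2
      refine r2.trans ?_
      have := hu s hs
      have := hq s hs
      gcongr
    have hmv := (convex_Icc (0 : ℝ) T).norm_image_sub_le_of_norm_hasDerivWithin_le
      (f := σ) (C := 2 * ‖h‖ * (K * (U * Q + U ^ 2)) +
        2 * K * T * ‖h‖ * (K * (M * U ^ 2 + U * Q + Q ^ 2))) hσd
      (fun s hs => by
        refine (norm_sub_le _ _).trans (add_le_add ?_ ?_)
        · refine (norm_inner_le_norm _ _).trans ?_
          have := (norm_snd_le (Y s h)).trans (hYn h s hs)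
          have := hR1 s hs
          gcongr
        · refine (norm_inner_le_norm _ _).trans ?_
          have := hB h s hs
          have := hR2 s hs
          gcongr) ⟨le_rfl, hT⟩ hTm
    have hs0 : σ 0 = ⟪h, x - z⟫ := by simp [hσ, hY0, hχ0]
    have hsT : ⟪h, (x - z) - ContinuousLinearMap.adjoint
      ((ContinuousLinearMap.snd ℝ E E).comp (Y T)) ((χ T (x, ξ)).1 - (χ T (z, ζ)).1)⟫
      = -(σ T - σ 0) - ⟪(Y T h).1, (χ T (x, ξ)).2 - (χ T (z, ζ)).2⟫ := by
      rw [hs0, inner_sub_right, ContinuousLinearMap.adjoint_inner_right]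
      simp only [hσ, ContinuousLinearMap.comp_apply, ContinuousLinearMap.coe_snd']
      ring
    rw [hsT]
    have hlast : ‖⟪(Y T h).1, (χ T (x, ξ)).2 - (χ T (z, ζ)).2⟫‖ ≤ 2 * K * T * ‖h‖ * Q := by
      refine (norm_inner_le_norm _ _).trans ?_
      have := hB h T hTm
      have := hq T hTm
      gcongr
    rw [← Real.norm_eq_abs]
    refine (norm_sub_le _ _).trans ?_
    rw [norm_neg]
    simp only [sub_zero, Real.norm_eq_abs T, abs_of_nonneg hT] at hmv
    refine (add_le_add hmv hlast).trans (le_of_eq ?_)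
    ring
  generalize hW : (x - z) - ContinuousLinearMap.adjoint
      ((ContinuousLinearMap.snd ℝ E E).comp (Y T)) ((χ T (x, ξ)).1 - (χ T (z, ζ)).1) = W at pair
  rcases eq_or_ne W 0 with h0 | h0
  · rw [h0, norm_zero]; positivity
  · have h1 := pair W
    rw [real_inner_self_eq_norm_sq, abs_of_nonneg (sq_nonneg _), sq] at h1
    exact le_of_mul_le_mul_left h1 (norm_pos_iff.2 h0)

end AbstractPart

/-! ### Concrete part: the Hamiltonian vector field -/

section ConcretePart

theorem taylor_bounds {X G : Type*} [NormedAddCommGroup X] [NormedSpace ℝ X]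
    [NormedAddCommGroup G] [NormedSpace ℝ G] {f : X → G} (hf : ContDiff ℝ 2 f) {A1 A2 : ℝ}
    (h1 : ∀ x, ‖fderiv ℝ f x‖ ≤ A1) (h2 : ∀ x, ‖fderiv ℝ (fderiv ℝ f) x‖ ≤ A2) (z u : X) :
    ‖f (z + u) - f z‖ ≤ A1 * ‖u‖ ∧ ‖f (z + u) - f z - fderiv ℝ f z u‖ ≤ A2 * ‖u‖ ^ 2 := by
  have hd : ∀ x, HasFDerivAt f (fderiv ℝ f x) x := fun x =>
    (hf.differentiable (by norm_num) x).hasFDerivAt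
  have hd' : ∀ x, HasFDerivAt (fderiv ℝ f) (fderiv ℝ (fderiv ℝ f) x) x := fun x =>
    ((hf.fderiv_right (m := 1) (by norm_num)).differentiable (by norm_num) x).hasFDerivAt
  have hseg : ∀ y ∈ segment ℝ z (z + u), ‖y - z‖ ≤ ‖u‖ := fun y hy => by
    have := norm_sub_le_of_mem_segment hy
    simpa using this
  refine ⟨?_, ?_⟩
  · simpa using (convex_univ).norm_image_sub_le_of_norm_hasFDerivWithin_le
      (fun x _ => (hd x).hasFDerivWithinAt) (fun x _ => h1 x) (Set.mem_univ z)
      (Set.mem_univ (z + u))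
  · have A0 : 0 ≤ A2 := le_trans (norm_nonneg (fderiv ℝ (fderiv ℝ f) z)) (h2 z)
    have := (convex_segment z (z + u)).norm_image_sub_le_of_norm_hasFDerivWithin_le'
      (f := f) (f' := fun x => fderiv ℝ f x) (φ := fderiv ℝ f z) (C := A2 * ‖u‖)
      (fun x _ => (hd x).hasFDerivWithinAt)
      (fun x hx => by
        have h3 := (convex_univ).norm_image_sub_le_of_norm_hasFDerivWithin_le
          (fun x _ => (hd' x).hasFDerivWithinAt) (fun x _ => h2 x) (Set.mem_univ z)
          (Set.mem_univ x)
        refine h3.trans ?_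
        gcongr
        exact hseg x hx)
      (left_mem_segment ℝ z (z + u)) (right_mem_segment ℝ z (z + u))
    simp only [add_sub_cancel_left] at this
    exact this.trans (le_of_eq (by ring))

variable {n : ℕ}

/-- The Riesz map as a real continuous linear map. -/
def Td (n : ℕ) : (En n →L[ℝ] ℝ) →L[ℝ] En n :=
  LinearMap.mkContinuous
    { toFun := fun φ => (InnerProductSpace.toDual ℝ (En n)).symm φ
      map_add' := fun φ ψ => by simp
      map_smul' := fun c φ => by simp } 1 (fun φ => by simp)

theorem Td_apply (φ : En n →L[ℝ] ℝ) :
    Td n φ = (InnerProductSpace.toDual ℝ (En n)).symm φ := rfl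

theorem norm_Td (φ : En n →L[ℝ] ℝ) : ‖Td n φ‖ = ‖φ‖ := by simp [Td_apply]

theorem inner_Td (φ : En n →L[ℝ] ℝ) (v : En n) : ⟪Td n φ, v⟫ = φ v := by simp [Td_apply]

theorem inner_Td' (φ : En n →L[ℝ] ℝ) (v : En n) : ⟪v, Td n φ⟫ = φ v := by
  rw [real_inner_comm, inner_Td]

theorem inner_ev (i : Fin n) (v : En n) : ⟪ev i, v⟫ = v i := by
  simp [ev, EuclideanSpace.inner_single_left]

theorem inner_ev' (i : Fin n) (v : En n) : ⟪v, ev i⟫ = v i := by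
  rw [real_inner_comm, inner_ev]

theorem norm_ev (i : Fin n) : ‖(ev i : En n)‖ = 1 := by simp [ev]

theorem Td_proj (i : Fin n) : Td n (EuclideanSpace.proj i) = ev i := by
  refine ext_inner_right ℝ fun v => ?_
  rw [inner_Td, inner_ev]; rfl

/-- One summand of the Hamiltonian vector field. -/
def tF (b : En n → ℝ) (i j : Fin n) (w : En n × En n) : En n × En n :=
  (b w.1 • (w.2 j • ev i + w.2 i • ev j), -((w.2 i * w.2 j) • Td n (fderiv ℝ b w.1)))

/-- Linearization of `tF`. -/
def tL (b : En n → ℝ) (i j : Fin n) (w : En n × En n) : En n × En n →L[ℝ] En n × En n :=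
  (((fderiv ℝ b w.1).comp (ContinuousLinearMap.fst ℝ (En n) (En n))).smulRight
      (w.2 j • ev i + w.2 i • ev j : En n) +
    b w.1 • (((EuclideanSpace.proj j : En n →L[ℝ] ℝ).comp
        (ContinuousLinearMap.snd ℝ (En n) (En n))).smulRight (ev i) +
      ((EuclideanSpace.proj i : En n →L[ℝ] ℝ).comp
        (ContinuousLinearMap.snd ℝ (En n) (En n))).smulRight (ev j))).prod
  (-((w.2 i * w.2 j) • ((Td n).comp ((fderiv ℝ (fderiv ℝ b) w.1).comp
        (ContinuousLinearMap.fst ℝ (En n) (En n)))) +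
    ((w.2 j • (EuclideanSpace.proj i : En n →L[ℝ] ℝ) +
      w.2 i • (EuclideanSpace.proj j : En n →L[ℝ] ℝ)).comp
        (ContinuousLinearMap.snd ℝ (En n) (En n))).smulRight (Td n (fderiv ℝ b w.1))))

theorem tL_apply (b : En n → ℝ) (i j : Fin n) (w v : En n × En n) :
    tL b i j w v = (fderiv ℝ b w.1 v.1 • (w.2 j • ev i + w.2 i • ev j) +
      b w.1 • (v.2 j • ev i + v.2 i • ev j),
      -((w.2 i * w.2 j) • Td n (fderiv ℝ (fderiv ℝ b) w.1 v.1) +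
        (w.2 j * v.2 i + w.2 i * v.2 j) • Td n (fderiv ℝ b w.1))) := by
  simp [tL]

theorem coord_le (v : En n) (i : Fin n) : |v i| ≤ ‖v‖ := by
  simpa using PiLp.norm_apply_le v i

theorem norm_pair_le (v : En n) (i j : Fin n) : ‖v j • (ev i : En n) + v i • ev j‖ ≤ 2 * ‖v‖ := by
  refine (norm_add_le _ _).trans ?_
  rw [norm_smul, norm_smul, norm_ev, norm_ev, Real.norm_eq_abs, Real.norm_eq_abs]
  have := coord_le v i
  have := coord_le v j
  linarith

theorem abs_pair_le (η v : En n) (i j : Fin n) (h : ‖η‖ ≤ 8) :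
    |η j * v i + η i * v j| ≤ 16 * ‖v‖ := by
  refine (abs_add_le _ _).trans ?_
  rw [abs_mul, abs_mul]
  have h1 : |η j| * |v i| ≤ 8 * ‖v‖ :=
    mul_le_mul ((coord_le η j).trans h) (coord_le v i) (abs_nonneg _) (by norm_num)
  have h2 : |η i| * |v j| ≤ 8 * ‖v‖ :=
    mul_le_mul ((coord_le η i).trans h) (coord_le v j) (abs_nonneg _) (by norm_num)
  linarith

theorem abs_prod_le (η : En n) (i j : Fin n) (h : ‖η‖ ≤ 8) : |η i * η j| ≤ 64 := by
  rw [abs_mul]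
  have h1 : |η i| * |η j| ≤ 8 * 8 :=
    mul_le_mul ((coord_le η i).trans h) ((coord_le η j).trans h) (abs_nonneg _) (by norm_num)
  linarith

theorem abs_prod_le' (q : En n) (i j : Fin n) : |q i * q j| ≤ ‖q‖ ^ 2 := by
  rw [abs_mul, sq]
  exact mul_le_mul (coord_le q i) (coord_le q j) (abs_nonneg _) (norm_nonneg _)

theorem smul_le {X : Type*} [NormedAddCommGroup X] [NormedSpace ℝ X] {c A B : ℝ} {v : X}
    (hc : |c| ≤ A) (hv : ‖v‖ ≤ B) : ‖c • v‖ ≤ A * B := by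
  rw [norm_smul, Real.norm_eq_abs]
  exact mul_le_mul hc hv (norm_nonneg _) ((abs_nonneg _).trans hc)

set_option maxSynthPendingDepth 5 in
set_option synthInstance.maxHeartbeats 400000 in
set_option maxHeartbeats 1000000 in
theorem term_good {b : En n → ℝ} (hb : ContDiff ℝ (⊤ : ℕ∞) b) {c M : ℝ} (hc : 0 ≤ c) (hM : 0 ≤ M)
    (b0 : ∀ x, |b x| ≤ 2) (b1 : ∀ x, ‖fderiv ℝ b x‖ ≤ 1)
    (b2 : ∀ x, ‖fderiv ℝ (fderiv ℝ b) x‖ ≤ 1)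
    (b3 : ∀ x, ‖fderiv ℝ (fderiv ℝ (fderiv ℝ b)) x‖ ≤ c * M) (i j : Fin n) :
    GoodField (tF b i j) (tL b i j) (80 + 64 * c) M := by
  have hb' : ContDiff ℝ (⊤ : ℕ∞) (fderiv ℝ b) := hb.fderiv_right (by simp)
  have hb'' : ContDiff ℝ (⊤ : ℕ∞) (fderiv ℝ (fderiv ℝ b)) := hb'.fderiv_right (by simp)
  have le2 : (2 : WithTop ℕ∞) ≤ ((⊤ : ℕ∞) : WithTop ℕ∞) := by
    exact WithTop.coe_le_coe.2 (le_top : (2 : ℕ∞) ≤ ⊤)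
  have t0 := taylor_bounds (hb.of_le le2) b1 b2
  have t1 := taylor_bounds (hb'.of_le le2) b2 b3
  refine ⟨?_, ?_, ?_, ?_, ?_, ?_, ?_⟩
  · intro z η hη
    simp only [tF, norm_neg]
    have := smul_le (abs_prod_le η i j hη) (v := Td n (fderiv ℝ b z))
      ((norm_Td _).le.trans (b1 z))
    linarith
  · intro z η v hη
    rw [tL_apply, Prod.norm_mk]
    have hv1 := norm_fst_le v
    have hv2 := norm_snd_le v
    have hcv : 0 ≤ c * ‖v‖ := by positivity
    have hv0 := norm_nonneg v
    apply max_le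
    · refine (norm_add_le _ _).trans ?_
      have e1 := smul_le (c := fderiv ℝ b z v.1) (A := 1 * ‖v‖)
        ((((fderiv ℝ b z).le_opNorm v.1)).trans
          (mul_le_mul (b1 z) hv1 (norm_nonneg _) (by norm_num))) (norm_pair_le η i j)
      have e2 := smul_le (b0 z) (norm_pair_le v.2 i j)
      have e3 : 1 * ‖v‖ * (2 * ‖η‖) ≤ 1 * ‖v‖ * (2 * 8) := by gcongr
      simp only at e1 e2 ⊢
      linarith
    · rw [norm_neg]
      refine (norm_add_le _ _).trans ?_
      have e1 := smul_le (abs_prod_le η i j hη) (v := Td n (fderiv ℝ (fderiv ℝ b) z v.1))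
        (B := 1 * ‖v‖) (by
          rw [norm_Td]
          exact ((fderiv ℝ (fderiv ℝ b) z).le_opNorm v.1).trans
            (mul_le_mul (b2 z) hv1 (norm_nonneg _) (by norm_num)))
      have e2 := smul_le (abs_pair_le η v.2 i j hη) (v := Td n (fderiv ℝ b z))
        ((norm_Td _).le.trans (b1 z))
      simp only at e1 e2 ⊢
      linarith
  · rw [continuous_clm_apply]
    intro v
    simp only [tL_apply]
    have c0 := hb.continuous
    have c1 := hb'.continuous
    have c2 := hb''.continuous
    have c3 : Continuous fun w : En n × En n => fderiv ℝ b w.1 := c1.comp continuous_fst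
    have c4 : Continuous fun w : En n × En n => fderiv ℝ (fderiv ℝ b) w.1 := c2.comp continuous_fst
    have c5 : Continuous fun w : En n × En n => b w.1 := c0.comp continuous_fst
    have c6 : ∀ k, Continuous fun w : En n × En n => w.2 k := fun k => by fun_prop
    have c7 : Continuous fun w : En n × En n => fderiv ℝ b w.1 v.1 := c3.clm_apply continuous_const
    have c8 : Continuous fun w : En n × En n => fderiv ℝ (fderiv ℝ b) w.1 v.1 :=
      c4.clm_apply continuous_const
    have c9 := (Td n).continuous.comp c3
    have c10 := (Td n).continuous.comp c8
    refine Continuous.prodMk ?_ (Continuous.neg ?_)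
    · exact (c7.smul (((c6 j).smul continuous_const).add ((c6 i).smul continuous_const))).add
        (c5.smul continuous_const)
    · exact (((c6 i).mul (c6 j)).smul c10).add
        ((((c6 j).mul continuous_const).add ((c6 i).mul continuous_const)).smul c9)
  · intro z η u q hη hη'
    have hu : ‖u‖ ≤ ‖(u, q)‖ := norm_fst_le (u, q)
    have hq : ‖q‖ ≤ ‖(u, q)‖ := norm_snd_le (u, q)
    have hcv : 0 ≤ c * ‖(u, q)‖ := by positivity
    have hv0 := norm_nonneg (u, q)
    have e : tF b i j (z + u, η + q) - tF b i j (z, η) =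
        ((b (z + u) - b z) • ((η + q) j • ev i + (η + q) i • ev j) +
          b z • (q j • ev i + q i • ev j),
        -(((η + q) i * (η + q) j) • Td n (fderiv ℝ b (z + u) - fderiv ℝ b z) +
          ((η + q) j * q i + η i * q j) • Td n (fderiv ℝ b z))) := by
      simp only [tF, map_sub, PiLp.add_apply, Prod.mk_sub_mk, Prod.mk.injEq]
      constructor <;> module
    rw [e, Prod.norm_mk]
    apply max_le
    · refine (norm_add_le _ _).trans ?_
      have e1 := smul_le (c := b (z + u) - b z) (t0 z u).1 (norm_pair_le (η + q) i j)
      have e2 := smul_le (b0 z) (norm_pair_le q i j)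
      have e3 : 1 * ‖u‖ * (2 * ‖η + q‖) ≤ 1 * ‖u‖ * (2 * 8) := by gcongr
      linarith
    · rw [norm_neg]
      refine (norm_add_le _ _).trans ?_
      have e1 := smul_le (abs_prod_le (η + q) i j hη')
        (v := Td n (fderiv ℝ b (z + u) - fderiv ℝ b z)) ((norm_Td _).le.trans ((t1 z u).1))
      have e4 : |(η + q) j * q i + η i * q j| ≤ 16 * ‖q‖ := by
        refine (abs_add_le _ _).trans ?_
        rw [abs_mul, abs_mul]
        have h1 : |(η + q) j| * |q i| ≤ 8 * ‖q‖ :=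
          mul_le_mul ((coord_le _ j).trans hη') (coord_le q i) (abs_nonneg _) (by norm_num)
        have h2 : |η i| * |q j| ≤ 8 * ‖q‖ :=
          mul_le_mul ((coord_le η i).trans hη) (coord_le q j) (abs_nonneg _) (by norm_num)
        linarith
      have e2 := smul_le e4 (v := Td n (fderiv ℝ b z)) ((norm_Td _).le.trans (b1 z))
      linarith
  · intro z η u q hη hη'
    have e : (tF b i j (z + u, η + q) - tF b i j (z, η) - tL b i j (z, η) (u, q)).1 =
        (b (z + u) - b z - fderiv ℝ b z u) • (η j • ev i + η i • ev j) +
          (b (z + u) - b z) • (q j • ev i + q i • ev j) := by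
      rw [tL_apply]
      simp only [tF, PiLp.add_apply, Prod.mk_sub_mk]
      module
    rw [e]
    refine (norm_add_le _ _).trans ?_
    have e1 := smul_le (c := b (z + u) - b z - fderiv ℝ b z u) (t0 z u).2 (norm_pair_le η i j)
    have e2 := smul_le (c := b (z + u) - b z) (t0 z u).1 (norm_pair_le q i j)
    have e3 : 1 * ‖u‖ ^ 2 * (2 * ‖η‖) ≤ 1 * ‖u‖ ^ 2 * (2 * 8) := by gcongr
    have e4 : 0 ≤ ‖u‖ * ‖q‖ := by positivity
    have e5 : 0 ≤ ‖u‖ ^ 2 := by positivity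
    have e6 : 0 ≤ c * (‖u‖ * ‖q‖ + ‖u‖ ^ 2) := by positivity
    linarith
  · intro z η u q hη hη'
    have e : (tF b i j (z + u, η + q) - tF b i j (z, η) - tL b i j (z, η) (u, q)).2 =
        -((η i * η j) • Td n (fderiv ℝ b (z + u) - fderiv ℝ b z - fderiv ℝ (fderiv ℝ b) z u) +
          (η j * q i + η i * q j) • Td n (fderiv ℝ b (z + u) - fderiv ℝ b z) +
          (q i * q j) • Td n (fderiv ℝ b (z + u))) := by
      rw [tL_apply]
      simp only [tF, PiLp.add_apply, Prod.mk_sub_mk, map_sub]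
      module
    rw [e, norm_neg]
    refine (norm_add_le _ _).trans ((add_le_add_left (norm_add_le _ _) _).trans ?_)
    have e1 := smul_le (abs_prod_le η i j hη)
      (v := Td n (fderiv ℝ b (z + u) - fderiv ℝ b z - fderiv ℝ (fderiv ℝ b) z u))
      ((norm_Td _).le.trans ((t1 z u).2))
    have e2 := smul_le (abs_pair_le η q i j hη)
      (v := Td n (fderiv ℝ b (z + u) - fderiv ℝ b z)) ((norm_Td _).le.trans ((t1 z u).1))
    have e3 := smul_le (abs_prod_le' q i j) (v := Td n (fderiv ℝ b (z + u)))
      ((norm_Td _).le.trans (b1 (z + u)))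
    have e4 : 0 ≤ ‖u‖ * ‖q‖ := by positivity
    have e5 : 0 ≤ ‖q‖ ^ 2 := by positivity
    have e6 : 0 ≤ c * (‖u‖ * ‖q‖ + ‖q‖ ^ 2) := by positivity
    have e7 : 0 ≤ M * ‖u‖ ^ 2 := by positivity
    linarith
  · intro w Y V
    have hs : fderiv ℝ (fderiv ℝ b) w.1 Y.1 V.1 = fderiv ℝ (fderiv ℝ b) w.1 V.1 Y.1 :=
      ((hb.of_le le2).contDiffAt.isSymmSndFDerivAt (by simp)) _ _
    simp only [tL_apply, inner_add_left, inner_add_right, inner_neg_left, inner_neg_right,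
      real_inner_smul_left, real_inner_smul_right, inner_Td, inner_Td', inner_ev, inner_ev', hs]
    ring

theorem hamField_eq {a : Fin n → Fin n → En n → ℝ} (ha : ∀ i j, Differentiable ℝ (a i j))
    (w : En n × En n) : hamField a w = ∑ i, ∑ j, tF (a i j) i j w := by
  have h1 : gradient (fun ζ => ham a (w.1, ζ)) w.2 =
      ∑ i, ∑ j, a i j w.1 • (w.2 j • ev i + w.2 i • ev j : En n) := by
    have : HasFDerivAt (fun ζ : En n => ham a (w.1, ζ)) (∑ i, ∑ j, a i j w.1 •
        (w.2 j • (EuclideanSpace.proj i : En n →L[ℝ] ℝ) +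
          w.2 i • (EuclideanSpace.proj j : En n →L[ℝ] ℝ))) w.2 := by
      unfold ham
      refine HasFDerivAt.fun_sum fun i _ => HasFDerivAt.fun_sum fun j _ => ?_
      have hp : ∀ k : Fin n, HasFDerivAt (fun ζ : En n => ζ k)
        (EuclideanSpace.proj k : En n →L[ℝ] ℝ) w.2 := fun k =>
        (EuclideanSpace.proj k : En n →L[ℝ] ℝ).hasFDerivAt
      have := ((hp i).mul (hp j)).const_mul (a i j w.1)
      simp only [mul_assoc]
      refine this.congr_fderiv ?_
      rw [add_comm]
    unfold gradient
    rw [this.fderiv, ← Td_apply]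
    simp only [map_sum, map_smul, map_add, Td_proj]
  have h2 : gradient (fun z => ham a (z, w.2)) w.1 =
      ∑ i, ∑ j, (w.2 i * w.2 j) • Td n (fderiv ℝ (a i j) w.1) := by
    have : HasFDerivAt (fun z : En n => ham a (z, w.2)) (∑ i, ∑ j, (w.2 i * w.2 j) •
        fderiv ℝ (a i j) w.1) w.1 := by
      unfold ham
      refine HasFDerivAt.fun_sum fun i _ => HasFDerivAt.fun_sum fun j _ => ?_
      have := ((ha i j) w.1).hasFDerivAt.mul_const (w.2 i * w.2 j)
      simpa only [mul_assoc] using this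
    unfold gradient
    rw [this.fderiv, ← Td_apply]
    simp only [map_sum, map_smul]
  unfold hamField
  rw [h1, h2]
  ext1
  · simp [tF, Prod.fst_sum]
  · simp [tF, Prod.snd_sum]

set_option maxSynthPendingDepth 5 in
set_option synthInstance.maxHeartbeats 400000 in
set_option maxHeartbeats 1000000 in
theorem ham_good {μ : ℝ} (hμ : 1 ≤ μ) {Cα : ℕ → ℝ} {a : Fin n → Fin n → En n → ℝ}
    (ha : HamSetup μ Cα a) :
    GoodField (hamField a) (fun w => ∑ i, ∑ j, tL (a i j) i j w)
      ((n : ℝ) * (n * (80 + 64 * |Cα 3|)) + 1) (√μ) := by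
  obtain ⟨hs, -, hb, h3⟩ := ha
  have hF : hamField a = fun w => ∑ i, ∑ j, tF (a i j) i j w :=
    funext (hamField_eq fun i j => (hs i j).differentiable (by simp))
  rw [hF]
  have key : ∀ i j, GoodField (tF (a i j) i j) (tL (a i j) i j) (80 + 64 * |Cα 3|) (√μ) := by
    intro i j
    have e2 : ∀ x, ‖fderiv ℝ (fderiv ℝ (a i j)) x‖ = ‖iteratedFDeriv ℝ 2 (a i j) x‖ := fun x => by
      rw [← norm_iteratedFDeriv_one, norm_iteratedFDeriv_fderiv]
    have e3 : ∀ x, ‖fderiv ℝ (fderiv ℝ (fderiv ℝ (a i j))) x‖ =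
        ‖iteratedFDeriv ℝ 3 (a i j) x‖ := fun x => by
      rw [← norm_iteratedFDeriv_one, norm_iteratedFDeriv_fderiv, norm_iteratedFDeriv_fderiv]
    refine term_good (hs i j) (abs_nonneg _) (Real.sqrt_nonneg _) (fun x => ?_) (fun x => ?_)
      (fun x => ?_) (fun x => ?_) i j
    · have h := hb i j x
      have h1 : |a i j x| ≤ |a i j x - (if i = j then (1 : ℝ) else 0)| +
          |(if i = j then (1 : ℝ) else 0)| := by
        simpa using abs_add_le (a i j x - (if i = j then (1 : ℝ) else 0))
          (if i = j then (1 : ℝ) else 0)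
      have h2 : |(if i = j then (1 : ℝ) else 0)| ≤ 1 := by split_ifs <;> simp
      have := norm_nonneg (fderiv ℝ (a i j) x)
      have := norm_nonneg (iteratedFDeriv ℝ 2 (a i j) x)
      linarith
    · have h := hb i j x
      have := abs_nonneg (a i j x - (if i = j then (1 : ℝ) else 0))
      have := norm_nonneg (iteratedFDeriv ℝ 2 (a i j) x)
      linarith
    · rw [e2]
      have h := hb i j x
      have := abs_nonneg (a i j x - (if i = j then (1 : ℝ) else 0))
      have := norm_nonneg (fderiv ℝ (a i j) x)
      linarith
    · rw [e3]
      have h := h3 i j 3 x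
      have e : max (0 : ℝ) (((3 : ℕ) : ℝ) - 2) / 2 = 1 / 2 := by norm_num
      rw [e, ← Real.sqrt_eq_rpow] at h
      refine h.trans ?_
      gcongr
      exact le_abs_self _
  have := GoodField.sum Finset.univ fun i => GoodField.sum Finset.univ fun j => key i j
  simp only [Finset.sum_const, Finset.card_univ, Fintype.card_fin, nsmul_eq_mul] at this
  exact this.mono (Real.sqrt_nonneg _) (by linarith)

/-- Rescaling a Hamiltonian flow: time by `μ⁻¹`, frequency by `μ`. -/
theorem hamField_scale (a : Fin n → Fin n → En n → ℝ) (ha : ∀ i j, Differentiable ℝ (a i j))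
    (c : ℝ) (z η : En n) :
    hamField a (z, c • η) = (c • (hamField a (z, η)).1, c ^ 2 • (hamField a (z, η)).2) := by
  rw [hamField_eq ha, hamField_eq ha]
  simp only [Prod.fst_sum, Prod.snd_sum, Finset.smul_sum]
  ext1
  · simp only [Prod.fst_sum, tF]
    refine Finset.sum_congr rfl fun i _ => Finset.sum_congr rfl fun j _ => ?_
    simp only [PiLp.smul_apply, smul_eq_mul]
    module
  · simp only [Prod.snd_sum, tF]
    refine Finset.sum_congr rfl fun i _ => Finset.sum_congr rfl fun j _ => ?_
    simp only [PiLp.smul_apply, smul_eq_mul]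
    module

end ConcretePart


set_option maxHeartbeats 2000000 in
theorem final_arith {K s m r d p U Q : ℝ} (hK : 1 ≤ K) (hm : 1 ≤ m) (hr : 0 < r)
    (hs : s = m ^ 2 * r ^ 2) (hs1 : s ≤ 1) (hd : 0 ≤ d) (hp : 0 ≤ p) (hpr : p * (m ^ 2 * r) ≤ 1)
    (hU : U = 2 * d + 2 * K * s * p) (hQ : Q = 2 * (d + p)) :
    2 * K * s * Q + s * (2 * (K * (U * Q + U ^ 2)) +
      2 * K * s * (K * (m * U ^ 2 + U * Q + Q ^ 2))) ≤ 168 * K ^ 4 * (r * (1 + m ^ 2 * d ^ 2)) := by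
  have hs0 : 0 ≤ s := by rw [hs]; positivity
  have hmr : m * r ≤ 1 := by
    by_contra h
    push Not at h
    have : 1 < (m * r) ^ 2 := by nlinarith
    nlinarith
  have hr1 : r ≤ 1 := by nlinarith
  obtain ⟨q, hq⟩ : ∃ q, q = s * p := ⟨_, rfl⟩
  have hq0 : 0 ≤ q := by rw [hq]; positivity
  have hqr : q ≤ r := by
    have : q = r * (p * (m ^ 2 * r)) := by rw [hq, hs]; ring
    rw [this]
    exact mul_le_of_le_one_right hr.le hpr
  obtain ⟨R, hR⟩ : ∃ R, R = r * (1 + m ^ 2 * d ^ 2) := ⟨_, rfl⟩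
  have hrR : r ≤ R := by
    have : 0 ≤ r * (m ^ 2 * d ^ 2) := by positivity
    rw [hR]; linarith
  have hR0 : 0 ≤ R := hr.le.trans hrR
  have hmd : m * d ≤ 1 + m ^ 2 * d ^ 2 := by nlinarith [sq_nonneg (m * d - 1), sq_nonneg (m * d)]
  have hdd : d ≤ 1 + m ^ 2 * d ^ 2 := by nlinarith
  have f1 : s * d ≤ R := by
    have h1 : s * d = r * ((m * r) * (m * d)) := by rw [hs]; ring
    rw [h1, hR]
    refine mul_le_mul_of_nonneg_left ((mul_le_of_le_one_left (by positivity) hmr).trans hmd) hr.le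
  have f2 : s * d ^ 2 ≤ R := by
    have h1 : s * d ^ 2 = r * (r * (m ^ 2 * d ^ 2)) := by rw [hs]; ring
    rw [h1, hR]
    refine mul_le_mul_of_nonneg_left ((mul_le_of_le_one_left (by positivity) hr1).trans ?_) hr.le
    linarith
  have f3 : d * q ≤ R := by
    rw [hR, mul_comm]
    exact mul_le_mul hqr hdd hd hr.le
  have f4 : q ≤ R := hqr.trans hrR
  have f5 : q ^ 2 ≤ R := by nlinarith
  have f6 : s ^ 2 * m * d ^ 2 ≤ R := by
    have h1 : s ^ 2 * m * d ^ 2 = s * (r * ((m * r) * (m ^ 2 * d ^ 2))) := by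
      rw [sq s]; nth_rewrite 2 [hs]; ring
    rw [h1]
    refine (mul_le_of_le_one_left (by positivity) hs1).trans ?_
    rw [hR]
    refine mul_le_mul_of_nonneg_left ((mul_le_of_le_one_left (by positivity) hmr).trans ?_) hr.le
    linarith
  have f7 : s ^ 2 * m * q ^ 2 ≤ R := by
    have h1 : s ^ 2 * m * q ^ 2 ≤ 1 * m * (r * r) := by
      have : q ^ 2 ≤ r * r := by nlinarith
      have : s ^ 2 ≤ 1 := by nlinarith
      gcongr
    have h2 : 1 * m * (r * r) ≤ r := by nlinarith
    linarith
  have f8 : s * q ^ 2 ≤ R := (mul_le_of_le_one_left (by positivity) hs1).trans f5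
  have f9 : s * (d * q) ≤ R := (mul_le_of_le_one_left (by positivity) hs1).trans f3
  have f10 : s ^ 2 * d ^ 2 ≤ R := by
    have : s ^ 2 * d ^ 2 = s * (s * d ^ 2) := by ring
    rw [this]
    exact (mul_le_of_le_one_left (by positivity) hs1).trans f2
  have hU0 : 0 ≤ U := by rw [hU]; positivity
  have hQ0 : 0 ≤ Q := by rw [hQ]; positivity
  have hUle : U ≤ 2 * K * (d + q) := by rw [hU, hq]; nlinarith
  have g1 : s * Q ≤ 4 * R := by rw [hQ]; nlinarith
  have g2 : s * (U * Q) ≤ 16 * K * R := by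
    have h1 : s * (U * Q) ≤ s * ((2 * K * (d + q)) * Q) := by gcongr
    have h2 : s * ((2 * K * (d + q)) * Q) =
        4 * K * (s * d ^ 2 + d * q + s * (d * q) + q ^ 2) := by rw [hQ, hq]; ring
    have h3 : 4 * K * (s * d ^ 2 + d * q + s * (d * q) + q ^ 2) ≤ 4 * K * (4 * R) := by
      gcongr; linarith
    linarith
  have hU2 : U ^ 2 ≤ 8 * K ^ 2 * (d ^ 2 + q ^ 2) := by
    have h1 : U ^ 2 ≤ (2 * K * (d + q)) ^ 2 := by gcongr
    nlinarith [mul_nonneg (sq_nonneg K) (sq_nonneg (d - q))]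
  have g3 : s * U ^ 2 ≤ 16 * K ^ 2 * R := by
    have h1 : s * U ^ 2 ≤ s * (8 * K ^ 2 * (d ^ 2 + q ^ 2)) := by gcongr
    have h2 : s * (8 * K ^ 2 * (d ^ 2 + q ^ 2)) = 8 * K ^ 2 * (s * d ^ 2 + s * q ^ 2) := by ring
    have h3 : 8 * K ^ 2 * (s * d ^ 2 + s * q ^ 2) ≤ 8 * K ^ 2 * (2 * R) := by gcongr; linarith
    linarith
  have g4 : s ^ 2 * (m * U ^ 2) ≤ 16 * K ^ 2 * R := by
    have h1 : s ^ 2 * (m * U ^ 2) ≤ s ^ 2 * (m * (8 * K ^ 2 * (d ^ 2 + q ^ 2))) := by gcongr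
    have h2 : s ^ 2 * (m * (8 * K ^ 2 * (d ^ 2 + q ^ 2))) =
      8 * K ^ 2 * (s ^ 2 * m * d ^ 2 + s ^ 2 * m * q ^ 2) := by ring
    have h3 : 8 * K ^ 2 * (s ^ 2 * m * d ^ 2 + s ^ 2 * m * q ^ 2) ≤ 8 * K ^ 2 * (2 * R) := by
      gcongr; linarith
    linarith
  have g5 : s ^ 2 * (U * Q) ≤ 16 * K * R := by
    have : s ^ 2 * (U * Q) = s * (s * (U * Q)) := by ring
    rw [this]
    exact (mul_le_of_le_one_left (by positivity) hs1).trans g2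
  have g6 : s ^ 2 * Q ^ 2 ≤ 16 * R := by
    have h1 : s ^ 2 * Q ^ 2 ≤ 8 * (s ^ 2 * d ^ 2 + q ^ 2) := by
      have h2 : s ^ 2 * Q ^ 2 = 4 * (s * d + q) ^ 2 := by rw [hQ, hq]; ring
      have h3 := sq_nonneg (s * d - q)
      have h4 : 8 * (s ^ 2 * d ^ 2 + q ^ 2) = 4 * (s * d + q) ^ 2 + 4 * (s * d - q) ^ 2 := by ring
      linarith
    linarith
  rw [← hR]
  have k2 : K ≤ K ^ 4 := by
    calc K = K ^ 1 := (pow_one K).symm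
      _ ≤ K ^ 4 := pow_le_pow_right₀ hK (by norm_num)
  have k3 : K ^ 2 ≤ K ^ 4 := pow_le_pow_right₀ hK (by norm_num)
  have k4 : K ^ 3 ≤ K ^ 4 := pow_le_pow_right₀ hK (by norm_num)
  have e : 2 * K * s * Q + s * (2 * (K * (U * Q + U ^ 2)) +
      2 * K * s * (K * (m * U ^ 2 + U * Q + Q ^ 2))) =
      2 * K * (s * Q) + 2 * K * (s * (U * Q)) + 2 * K * (s * U ^ 2) +
      2 * K ^ 2 * (s ^ 2 * (m * U ^ 2)) + 2 * K ^ 2 * (s ^ 2 * (U * Q)) +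
      2 * K ^ 2 * (s ^ 2 * Q ^ 2) := by ring
  rw [e]
  calc _ ≤ 2 * K * (4 * R) + 2 * K * (16 * K * R) + 2 * K * (16 * K ^ 2 * R) +
      2 * K ^ 2 * (16 * K ^ 2 * R) + 2 * K ^ 2 * (16 * K * R) + 2 * K ^ 2 * (16 * R) := by gcongr
    _ = (8 * K + 64 * K ^ 2 + 64 * K ^ 3 + 32 * K ^ 4) * R := by ring
    _ ≤ 168 * K ^ 4 * R := by
      refine mul_le_mul_of_nonneg_right ?_ hR0
      linarith

/-- The rescaled flow. -/
def scaled {n : ℕ} (μ : ℝ) (χ : ℝ → En n × En n → En n × En n) (s : ℝ) (w : En n × En n) :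
    En n × En n :=
  ((χ (s / μ) (w.1, μ • w.2)).1, μ⁻¹ • (χ (s / μ) (w.1, μ • w.2)).2)

theorem scaled_zero {n : ℕ} {μ : ℝ} (hμ : μ ≠ 0) {χ : ℝ → En n × En n → En n × En n}
    (h : ∀ w, χ 0 w = w) (w : En n × En n) : scaled μ χ 0 w = w := by
  simp [scaled, h, smul_smul, hμ]

theorem scaled_deriv {n : ℕ} {μ : ℝ} (hμ : μ ≠ 0) {a : Fin n → Fin n → En n → ℝ}
    (ha : ∀ i j, Differentiable ℝ (a i j)) {χ : ℝ → En n × En n → En n × En n}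
    (h : ∀ w t, HasDerivAt (fun s => χ s w) (hamField a (χ t w)) t) (w : En n × En n) (s : ℝ) :
    HasDerivAt (fun s => scaled μ χ s w) (hamField a (scaled μ χ s w)) s := by
  have h1 := h (w.1, μ • w.2) (s / μ)
  have h2 : HasDerivAt (fun s : ℝ => s / μ) (1 / μ) s := (hasDerivAt_id s).div_const μ
  have h3 := HasDerivAt.scomp s h1 h2
  have h4 : χ (s / μ) (w.1, μ • w.2) =
      ((scaled μ χ s w).1, μ • (scaled μ χ s w).2) := by
    simp [scaled, smul_smul, hμ]
  rw [h4, hamField_scale a ha] at h3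
  have h5 : HasDerivAt (fun s : ℝ => (χ (s / μ) (w.1, μ • w.2)).1) _ s :=
    (ContinuousLinearMap.fst ℝ (En n) (En n)).hasFDerivAt.comp_hasDerivAt s h3
  have h6 : HasDerivAt (fun s : ℝ => (χ (s / μ) (w.1, μ • w.2)).2) _ s :=
    (ContinuousLinearMap.snd ℝ (En n) (En n)).hasFDerivAt.comp_hasDerivAt s h3
  have h7 := h5.prodMk (h6.const_smul μ⁻¹)
  have h8 : HasDerivAt (fun s => scaled μ χ s w) _ s := h7
  refine h8.congr_deriv ?_
  apply Prod.ext
  · simp [smul_smul, hμ]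
  · simp [smul_smul, hμ, sq]
/-- For `μ⁻² ≤ t ≤ ε μ⁻¹`, `ξ, ζ` in the annulus with
`|ξ − ζ| ≤ t^{-1/2}`,
`t^{-1/2} |(x − z) − (d_ζ ζ_t)(z,ζ) · (z_t(x,ξ) − z_t(z,ζ))| ≤ C (1 + μ|x−z|²)`,
where `(d_ζ ζ_t · w)ᵢ = Σ_k ∂_{ζᵢ}(ζ_t)_k w_k`, i.e. the adjoint of the Jacobian
`d_ζ ζ_t` acts on `w`. -/
theorem statement15 {n : ℕ} (hn : 2 ≤ n) (Cα : ℕ → ℝ) :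
    ∃ ε : ℝ, 0 < ε ∧ ∃ C : ℝ,
      ∀ (μ : ℝ), 1 ≤ μ →
      ∀ (a : Fin n → Fin n → En n → ℝ), HamSetup μ Cα a →
      ∀ (χ : ℝ → En n × En n → En n × En n), IsHamFlow a χ →
      ∀ (t : ℝ), μ⁻¹ ^ 2 ≤ t → t ≤ ε * μ⁻¹ →
      ∀ (x z ξ ζ : En n), μ / 4 ≤ ‖ξ‖ → ‖ξ‖ ≤ 4 * μ → μ / 4 ≤ ‖ζ‖ → ‖ζ‖ ≤ 4 * μ →
        ‖ξ - ζ‖ ≤ t ^ (-(1 : ℝ) / 2) →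
        t ^ (-(1 : ℝ) / 2) *
            ‖(x - z) -
              ContinuousLinearMap.adjoint (fderiv ℝ (fun ζ' => (χ t (z, ζ')).2) ζ)
                ((χ t (x, ξ)).1 - (χ t (z, ζ)).1)‖
          ≤ C * (1 + μ * ‖x - z‖ ^ 2) := by
  obtain ⟨K, hKdef⟩ : ∃ K : ℝ, K = (n : ℝ) * (n * (80 + 64 * |Cα 3|)) + 1 := ⟨_, rfl⟩
  have hK : 1 ≤ K := by
    rw [hKdef]
    have : 0 ≤ (n : ℝ) * (n * (80 + 64 * |Cα 3|)) := by positivity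
    linarith
  have hK0 : 0 < K := by linarith
  refine ⟨1 / (8 * K), by positivity, 168 * K ^ 4, ?_⟩
  intro μ hμ a ha χ hχ t ht1 ht2 x z ξ ζ _ hξ _ hζ hξζ
  have hμ0 : 0 < μ := by linarith
  have hμne : μ ≠ 0 := hμ0.ne'
  have ht0 : 0 < t := lt_of_lt_of_le (by positivity) ht1
  have had : ∀ i j, Differentiable ℝ (a i j) := fun i j => (ha.1 i j).differentiable (by simp)
  have hG := ham_good hμ ha
  rw [← hKdef] at hG
  have hKT : K * (μ * t) ≤ 1 / 8 := by
    have h1 : K * (μ * t) ≤ K * (μ * (1 / (8 * K) * μ⁻¹)) := by gcongr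
    have h2 : K * (μ * (1 / (8 * K) * μ⁻¹)) = 1 / 8 := by field_simp
    linarith
  have hT0 : 0 ≤ μ * t := by positivity
  have hs1 : μ * t ≤ 1 := by nlinarith
  have hn4 : ∀ v : En n, ‖v‖ ≤ 4 * μ → ‖μ⁻¹ • v‖ ≤ 4 := by
    intro v hv
    rw [norm_smul, norm_inv, Real.norm_eq_abs, abs_of_pos hμ0, inv_mul_le_iff₀ hμ0]
    linarith
  have key := symplectic_estimate hG (Real.sqrt_nonneg μ) hK hT0 hKT
    (χ := scaled μ χ) (scaled_zero hμne hχ.1) (scaled_deriv hμne had hχ.2)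
    (x := x) (z := z) (hn4 ξ hξ) (hn4 ζ hζ) rfl rfl
  have hfd : fderiv ℝ (fun ζ' => (scaled μ χ (μ * t) (z, ζ')).2) (μ⁻¹ • ζ) =
      fderiv ℝ (fun ζ' => (χ t (z, ζ')).2) ζ := by
    have e1 : (fun ζ' => (scaled μ χ (μ * t) (z, ζ')).2) =
        μ⁻¹ • (fun ζ' => (fun ζ'' => (χ t (z, ζ'')).2) (μ • ζ')) := by
      funext ζ'
      simp [scaled, mul_div_cancel_left₀ t hμne]
    rw [e1, fderiv_const_smul_field, Pi.smul_apply,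
      fderiv_comp_smul (f := fun ζ'' => (χ t (z, ζ'')).2), smul_smul, smul_smul, inv_mul_cancel₀ hμne,
      mul_inv_cancel₀ hμne, one_smul, one_smul]
  have hz1 : ∀ y η : En n, (scaled μ χ (μ * t) (y, μ⁻¹ • η)).1 = (χ t (y, η)).1 := by
    intro y η
    simp [scaled, mul_div_cancel_left₀ t hμne, smul_smul, hμne]
  rw [hfd, hz1, hz1] at key
  have hrp : t ^ (-(1 : ℝ) / 2) = (√t)⁻¹ := by
    rw [neg_div, Real.rpow_neg ht0.le, Real.sqrt_eq_rpow]
  rw [hrp] at hξζ ⊢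
  have hr : 0 < √t := Real.sqrt_pos.2 ht0
  have hm : 1 ≤ √μ := Real.one_le_sqrt.2 hμ
  have hm2 : √μ ^ 2 = μ := Real.sq_sqrt hμ0.le
  have hr2 : √t ^ 2 = t := Real.sq_sqrt ht0.le
  have hp : ‖μ⁻¹ • ξ - μ⁻¹ • ζ‖ * (√μ ^ 2 * √t) ≤ 1 := by
    rw [← smul_sub, norm_smul, norm_inv, Real.norm_eq_abs, abs_of_pos hμ0, hm2]
    have : μ⁻¹ * ‖ξ - ζ‖ * (μ * √t) = ‖ξ - ζ‖ * √t := by field_simp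
    rw [this]
    calc ‖ξ - ζ‖ * √t ≤ (√t)⁻¹ * √t := by gcongr
      _ = 1 := inv_mul_cancel₀ hr.ne'
  have fin := key.trans (final_arith hK hm hr (by rw [hm2, hr2]) hs1 (norm_nonneg (x - z))
    (norm_nonneg _) hp rfl rfl)
  rw [inv_mul_le_iff₀ hr]
  refine fin.trans (le_of_eq ?_)
  rw [hm2]
  ring
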